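/- Supporting computation for the arc fiber of xy = z² − w⁵: Let k be a field of characteristic zero, and let B = k[w₁, x₁, x₂, x₃, x₄, y₁, y₂, y₃, y₄, z₁, z₂, z₃, z₄] be a polynomial ring in 13 variables (MvPolynomial over Fin 13 with the variables so named). Consider the ideal generated by h₂ = x₁y₁ − z₁², h₃ = x₁y₂ + x₂y₁ − 2z₁z₂, h₄ = x₁y₃ + x₂y₂ + x₃y₁ − 2z₁z₃ − z₂², and h₅ = x₁y₄ + x₂y₃ + x₃y₂ + x₄y₁ − 2z₁z₄ − 2z₂z₃ + w₁⁵. Then the localization of B/(h₂, h₃, h₄, h₅) at the multiplicative submonoid generated by the images of w₁, x₂ and x₁ is an integral domain of Krull dimension 9. -/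

import Mathlib

/-!
The relations `h₂, …, h₅` are linear in `y₁, …, y₄`, with a lower triangular Toeplitz
coefficient matrix whose diagonal entries are `x₁`. Once `x₁` is inverted, they have a unique
solution in the `yᵢ`, so the localization is that of the polynomial ring in
`w₁, x₁, …, x₄, z₁, …, z₄` at the monoid generated by `w₁, x₂, x₁`. No dimension is lost by
this localization, because the inverted elements are units at the rational point `(1, …, 1)`.
-/

open MvPolynomial

section LinearSystem

variable {A B m n : Type*} [CommRing A] [CommRing B] [Algebra A B] [Fintype n]

/-- The ideal of `A[Yⱼ]` generated by the equations `∑ⱼ Mᵢⱼ Yⱼ = bᵢ` of a linear system. -/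
noncomputable def linearSystemIdeal (M : Matrix m n A) (b : m → A) : Ideal (MvPolynomial n A) :=
  Ideal.span (Set.range fun i ↦ ∑ j, C (M i j) * X j - C (b i))

/-- The `A`-algebra carrying the universal solution of the linear system `M y = b`: its
`A`-algebra homomorphisms to `B` are the solutions of the system in `B`. -/
abbrev SolutionAlgebra (M : Matrix m n A) (b : m → A) : Type _ :=
  MvPolynomial n A ⧸ linearSystemIdeal M b

theorem linearSystemIdeal_le_ker_aeval_iff {M : Matrix m n A} {b : m → A} {y : n → B} :
    linearSystemIdeal M b ≤ RingHom.ker (aeval (R := A) y) ↔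
      (M.map (algebraMap A B)).mulVec y = algebraMap A B ∘ b := by
  simp [linearSystemIdeal, Ideal.span_le, Set.range_subset_iff, funext_iff, Matrix.mulVec,
    dotProduct, sub_eq_zero]

theorem SolutionAlgebra.mulVec_algHom_mk_X {M : Matrix m n A} {b : m → A}
    (φ : SolutionAlgebra M b →ₐ[A] B) :
    (M.map (algebraMap A B)).mulVec (fun j ↦ φ (Ideal.Quotient.mk _ (X j))) =
      algebraMap A B ∘ b := by
  refine linearSystemIdeal_le_ker_aeval_iff.mp fun p hp ↦ ?_
  have hφ : aeval (fun j ↦ φ (Ideal.Quotient.mk _ (X j))) =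
      φ.comp (Ideal.Quotient.mkₐ A (linearSystemIdeal M b)) := by
    ext j
    simp
  simp [hφ, Ideal.Quotient.eq_zero_iff_mem.mpr hp]

variable [DecidableEq n] {M : Matrix n n A} {b : n → A}

theorem SolutionAlgebra.algHom_subsingleton (hM : IsUnit (algebraMap A B M.det)) :
    Subsingleton (SolutionAlgebra M b →ₐ[A] B) := by
  refine ⟨fun φ ψ ↦ ?_⟩
  have hMB : IsUnit (M.map (algebraMap A B)) := by
    rwa [Matrix.isUnit_iff_isUnit_det, ← RingHom.mapMatrix_apply, ← RingHom.map_det]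
  have hφψ := Matrix.mulVec_injective_of_isUnit hMB
    ((mulVec_algHom_mk_X φ).trans (mulVec_algHom_mk_X ψ).symm)
  exact Ideal.Quotient.algHom_ext A (MvPolynomial.algHom_ext (congrFun hφψ))

theorem SolutionAlgebra.nonempty_algHom (hM : IsUnit (algebraMap A B M.det)) :
    Nonempty (SolutionAlgebra M b →ₐ[A] B) := by
  have hMB : IsUnit (M.map (algebraMap A B)).det := by
    rwa [← RingHom.mapMatrix_apply, ← RingHom.map_det]
  refine ⟨Ideal.Quotient.liftₐ _
    (aeval ((M.map (algebraMap A B))⁻¹.mulVec (algebraMap A B ∘ b))) fun p hp ↦ ?_⟩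
  refine linearSystemIdeal_le_ker_aeval_iff.mpr ?_ hp
  rw [Matrix.mulVec_mulVec, Matrix.mul_nonsing_inv _ hMB, Matrix.one_mulVec]

theorem SolutionAlgebra.isLocalization {N : Submonoid A} (hM : M.det ∈ N) (L : Type*) [CommRing L]
    [Algebra A L] [Algebra (SolutionAlgebra M b) L] [IsScalarTower A (SolutionAlgebra M b) L]
    [IsLocalization (Algebra.algebraMapSubmonoid (SolutionAlgebra M b) N) L] :
    IsLocalization N L := by
  let NQ := Algebra.algebraMapSubmonoid (SolutionAlgebra M b) N
  have isUnit_algebraMap (a : N) : IsUnit (algebraMap A L a) := by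
    rw [IsScalarTower.algebraMap_apply A (SolutionAlgebra M b) L]
    exact IsLocalization.map_units L (⟨_, a, a.2, rfl⟩ : NQ)
  obtain ⟨ψ⟩ := nonempty_algHom (b := b) (IsLocalization.map_units (Localization N) ⟨_, hM⟩)
  have isUnit_ψ (q : NQ) : IsUnit (ψ q) := by
    obtain ⟨_, a, ha, rfl⟩ := q
    simpa using IsLocalization.map_units (Localization N) ⟨a, ha⟩
  let fromL : L →ₐ[A] Localization N := IsLocalization.liftAlgHom (M := NQ) isUnit_ψ
  let toL : Localization N →ₐ[A] L :=
    IsLocalization.liftAlgHom (M := N) (f := Algebra.ofId A L) isUnit_algebraMap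
  have toL_fromL : toL.comp fromL = AlgHom.id A L := by
    have := algHom_subsingleton (b := b) (isUnit_algebraMap ⟨_, hM⟩)
    exact IsLocalization.algHom_ext NQ (Subsingleton.elim _ _)
  have fromL_toL : fromL.comp toL = AlgHom.id A (Localization N) := by
    have := IsLocalization.algHom_subsingleton (R := A) (S := Localization N)
      (P := Localization N) N
    exact Subsingleton.elim _ _
  exact IsLocalization.isLocalization_of_algEquiv N (.ofAlgHom toL fromL toL_fromL fromL_toL)

end LinearSystem

section LowerToeplitz

variable {A : Type*} [CommRing A] {n : ℕ}

/-- The lower triangular Toeplitz matrix with first column `x`, i.e. the matrix of multiplication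
by `∑ᵢ xᵢ tⁱ` on polynomials in `t` truncated at degree `n`. -/
def lowerToeplitz (x : Fin n → A) : Matrix (Fin n) (Fin n) A :=
  .of fun i j ↦ if j ≤ i then x (i - j) else 0

theorem det_lowerToeplitz [NeZero n] (x : Fin n → A) : (lowerToeplitz x).det = x 0 ^ n := by
  rw [Matrix.det_of_isLowerTriangular]
  · simp [lowerToeplitz]
  · intro i j hij
    exact if_neg (not_le.mpr hij)

theorem lowerToeplitz_fin_four (x : Fin 4 → A) :
    lowerToeplitz x =
      !![x 0, 0, 0, 0;
         x 1, x 0, 0, 0;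
         x 2, x 1, x 0, 0;
         x 3, x 2, x 1, x 0] := by
  ext i j
  fin_cases i <;> fin_cases j <;> rfl

end LowerToeplitz

section KrullDim

variable {A B R σ : Type*} [CommRing A] [CommRing B] [CommRing R]

theorem ringKrullDim_le_of_isLocalization (N : Submonoid A) (L : Type*) [CommRing L] [Algebra A L]
    [IsLocalization N L] : ringKrullDim L ≤ ringKrullDim A :=
  Order.krullDim_le_of_strictMono (PrimeSpectrum.comap (algebraMap A L)) <|
    Monotone.strictMono_of_injective (fun _ _ h ↦ Ideal.comap_mono h)
      (PrimeSpectrum.localization_comap_injective L N)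

theorem ringKrullDim_localization_map_le (N : Submonoid A) {ε : A →+* B}
    (hε : Function.Surjective ε) :
    ringKrullDim (Localization (N.map ε)) ≤ ringKrullDim (Localization N) :=
  ringKrullDim_le_of_surjective _ <|
    IsLocalization.map_surjective_of_surjective N (Localization N) (Localization (N.map ε)) hε

theorem ringKrullDim_localization_map_add_one_le (N : Submonoid A) {ε : A →+* B}
    (hε : Function.Surjective ε) {r : A} (hr : r ∈ nonZeroDivisors A) (hεr : ε r = 0) :
    ringKrullDim (Localization (N.map ε)) + 1 ≤ ringKrullDim (Localization N) :=
  ringKrullDim_succ_le_of_surjective _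
    (IsLocalization.map_surjective_of_surjective N (Localization N) (Localization (N.map ε)) hε)
    (IsLocalization.map_nonZeroDivisors_le N (Localization N) ⟨r, hr, rfl⟩)
    (by rw [IsLocalization.map_eq, hεr, map_zero])

theorem ringKrullDim_le_localization_of_surjective_of_isUnit {N : Submonoid A} {ε : A →+* B}
    (hε : Function.Surjective ε) (hN : ∀ a ∈ N, IsUnit (ε a)) :
    ringKrullDim B ≤ ringKrullDim (Localization N) :=
  ringKrullDim_le_of_surjective (IsLocalization.lift fun a : N ↦ hN a a.2) fun b ↦
    (hε b).imp' (algebraMap A (Localization N)) fun a ha ↦ by rw [IsLocalization.lift_eq, ha]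

theorem ringKrullDim_add_natCard_le_localization [Finite σ] {N : Submonoid (MvPolynomial σ R)}
    {c : σ → R} (hN : ∀ p ∈ N, IsUnit (eval c p)) :
    ringKrullDim R + Nat.card σ ≤ ringKrullDim (Localization N) := by
  induction σ using Finite.induction_empty_option with
  | @of_equiv σ τ e ih =>
    let ε : MvPolynomial τ R →+* MvPolynomial σ R := renameEquiv R e.symm
    have hεN : ∀ p ∈ N.map ε, IsUnit (eval (c ∘ e) p) := by
      rintro _ ⟨p, hp, rfl⟩
      simpa [ε, eval_rename, Function.comp_assoc] using hN p hp
    rw [← Nat.card_congr e]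
    exact (ih hεN).trans
      (ringKrullDim_localization_map_le N (renameEquiv R e.symm).surjective)
  | h_empty =>
    simpa using ringKrullDim_le_localization_of_surjective_of_isUnit (ε := eval c)
      (fun r ↦ ⟨C r, eval_C r⟩) hN
  | @h_option σ _ ih =>
    let f := optionEquivLeft R σ
    let ε : MvPolynomial (Option σ) R →+* MvPolynomial σ R :=
      (Polynomial.evalRingHom (C (c none))).comp f
    let r : MvPolynomial (Option σ) R := f.symm (.X - .C (C (c none)))
    have hεN : ∀ p ∈ N.map ε, IsUnit (eval (c ∘ some) p) := by
      rintro _ ⟨p, hp, rfl⟩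
      have hc : c = fun i ↦ i.elim (c none) (c ∘ some) := by
        ext (_ | _) <;> rfl
      have hp' := hN p hp
      rw [hc, optionEquivLeft_elim_eval, Polynomial.eval_map] at hp'
      simpa [ε, f, Polynomial.hom_eval₂, ← Polynomial.eval₂_at_apply] using hp'
    have hε : Function.Surjective ε := fun p ↦ ⟨f.symm (.C p), by simp [ε]⟩
    have hr : r ∈ nonZeroDivisors _ :=
      mem_nonZeroDivisors_of_injective f.injective <| by
        simpa [r] using (Polynomial.monic_X_sub_C _).mem_nonZeroDivisors
    have hεr : ε r = 0 := by simp [ε, r]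
    calc ringKrullDim R + Nat.card (Option σ)
        = ringKrullDim R + Nat.card σ + 1 := by simp [add_assoc]
      _ ≤ ringKrullDim (Localization (N.map ε)) + 1 := by gcongr; exact ih hεN
      _ ≤ ringKrullDim (Localization N) := ringKrullDim_localization_map_add_one_le N hε hr hεr

theorem ringKrullDim_localization_mvPolynomial [IsNoetherianRing R] [Finite σ]
    {N : Submonoid (MvPolynomial σ R)} {c : σ → R} (hN : ∀ p ∈ N, IsUnit (eval c p)) :
    ringKrullDim (Localization N) = ringKrullDim R + Nat.card σ :=
  le_antisymm
    ((ringKrullDim_le_of_isLocalization N _).trans_eq ringKrullDim_of_isNoetherianRing)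
    (ringKrullDim_add_natCard_le_localization hN)

end KrullDim

section ArcFiber

/-- Splits the variables into the unknowns `y₁, …, y₄` (left) and the parameters
`w₁, x₁, …, x₄, z₁, …, z₄` (right, in this order). -/
def arcVarEquiv : Fin 13 ≃ Fin 4 ⊕ Fin 9 where
  toFun := ![.inr 0, .inr 1, .inr 2, .inr 3, .inr 4, .inl 0, .inl 1, .inl 2, .inl 3,
    .inr 5, .inr 6, .inr 7, .inr 8]
  invFun := Sum.elim ![5, 6, 7, 8] ![0, 1, 2, 3, 4, 9, 10, 11, 12]
  left_inv := by decide
  right_inv := by decide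

variable (R : Type*) [CommRing R]

/-- The ideal generated by `h₂, h₃, h₄, h₅`. -/
noncomputable def arcIdeal : Ideal (MvPolynomial (Fin 13) R) :=
  Ideal.span
    {X 1 * X 5 - X 9 ^ 2,
     X 1 * X 6 + X 2 * X 5 - 2 * X 9 * X 10,
     X 1 * X 7 + X 2 * X 6 + X 3 * X 5 - 2 * X 9 * X 11 - X 10 ^ 2,
     X 1 * X 8 + X 2 * X 7 + X 3 * X 6 + X 4 * X 5
       - 2 * X 9 * X 12 - 2 * X 10 * X 11 + X 0 ^ 5}

/-- The matrix sending `y₁, …, y₄` to the coefficients of `t², …, t⁵` in `X(t)Y(t)`. -/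
noncomputable def arcMatrix : Matrix (Fin 4) (Fin 4) (MvPolynomial (Fin 9) R) :=
  lowerToeplitz ![X 1, X 2, X 3, X 4]

/-- The coefficients of `t², …, t⁵` in `Z(t)² - W(t)⁵`. -/
noncomputable def arcRhs : Fin 4 → MvPolynomial (Fin 9) R :=
  ![X 5 ^ 2, 2 * X 5 * X 6, 2 * X 5 * X 7 + X 6 ^ 2, 2 * X 5 * X 8 + 2 * X 6 * X 7 - X 0 ^ 5]

/-- The polynomial ring in all variables as the polynomial ring in the `yᵢ` over the one in the
parameters. -/
noncomputable def arcPolyEquiv :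
    MvPolynomial (Fin 13) R ≃ₐ[R] MvPolynomial (Fin 4) (MvPolynomial (Fin 9) R) :=
  (renameEquiv R arcVarEquiv).trans (sumAlgEquiv R (Fin 4) (Fin 9))

theorem arcPolyEquiv_X (i : Fin 13) :
    arcPolyEquiv R (X i) = Sum.elim X (fun j ↦ C (X j)) (arcVarEquiv i) := by
  rcases h : arcVarEquiv i <;> simp [arcPolyEquiv, h]

theorem map_arcPolyEquiv_arcIdeal :
    (arcIdeal R).map (arcPolyEquiv R) = linearSystemIdeal (arcMatrix R) (arcRhs R) := by
  have range_eq (f : Fin 4 → MvPolynomial (Fin 4) (MvPolynomial (Fin 9) R)) :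
      Set.range f = {f 0, f 1, f 2, f 3} := by
    ext
    simp [Fin.exists_fin_succ, eq_comm]
  rw [arcIdeal, linearSystemIdeal, Ideal.map_span, range_eq]
  simp only [Set.image_insert_eq, Set.image_singleton]
  congr! 4
  all_goals
    simp only [map_zero, map_add, map_sub, map_mul, map_pow, map_ofNat, arcPolyEquiv_X, arcVarEquiv,
      Equiv.coe_fn_mk, Sum.elim_inl, Sum.elim_inr, arcMatrix, lowerToeplitz_fin_four, arcRhs,
      Fin.sum_univ_four, Matrix.of_apply, Matrix.cons_val, Set.singleton_eq_singleton_iff]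
    ring

/-- The monoid of parameters generated by `w₁, x₂, x₁`. -/
noncomputable def arcMonoid : Submonoid (MvPolynomial (Fin 9) R) :=
  Submonoid.closure {X 0, X 2, X 1}

theorem det_arcMatrix_mem_arcMonoid : (arcMatrix R).det ∈ arcMonoid R := by
  rw [arcMatrix, det_lowerToeplitz]
  exact pow_mem (Submonoid.subset_closure (by simp)) 4

variable {R} in
theorem isUnit_eval_one_of_mem_arcMonoid {p : MvPolynomial (Fin 9) R} (hp : p ∈ arcMonoid R) :
    IsUnit (eval 1 p) := by
  have h : arcMonoid R ≤ (IsUnit.submonoid R).comap (eval (1 : Fin 9 → R)) := by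
    simp [arcMonoid, Submonoid.closure_le, Set.insert_subset_iff]
  exact h hp

theorem arcMonoid_le_nonZeroDivisors [IsDomain R] :
    arcMonoid R ≤ nonZeroDivisors (MvPolynomial (Fin 9) R) := by
  simp [arcMonoid, Submonoid.closure_le, Set.insert_subset_iff]

/-- The submonoid of `B / (h₂, h₃, h₄, h₅)` generated by the images of `w₁, x₂, x₁`. -/
noncomputable def arcQuotientMonoid : Submonoid (MvPolynomial (Fin 13) R ⧸ arcIdeal R) :=
  Submonoid.closure
    {Ideal.Quotient.mk _ (X 0), Ideal.Quotient.mk _ (X 2), Ideal.Quotient.mk _ (X 1)}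

/-- The quotient `B / (h₂, h₃, h₄, h₅)` as the algebra of solutions of a linear system in the
`yᵢ`. -/
noncomputable def arcQuotientEquiv :
    (MvPolynomial (Fin 13) R ⧸ arcIdeal R) ≃+* SolutionAlgebra (arcMatrix R) (arcRhs R) :=
  Ideal.quotientEquiv _ _ (arcPolyEquiv R).toRingEquiv (map_arcPolyEquiv_arcIdeal R).symm

theorem arcQuotientEquiv_mk (p : MvPolynomial (Fin 13) R) :
    arcQuotientEquiv R (Ideal.Quotient.mk _ p) = Ideal.Quotient.mk _ (arcPolyEquiv R p) :=
  rfl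

theorem map_arcQuotientEquiv_arcQuotientMonoid :
    (arcQuotientMonoid R).map (arcQuotientEquiv R).toMonoidHom =
      Algebra.algebraMapSubmonoid (SolutionAlgebra (arcMatrix R) (arcRhs R)) (arcMonoid R) := by
  have algebraMap_eq (p : MvPolynomial (Fin 9) R) :
      algebraMap _ (SolutionAlgebra (arcMatrix R) (arcRhs R)) p = Ideal.Quotient.mk _ (C p) := rfl
  rw [Algebra.algebraMapSubmonoid, arcQuotientMonoid, arcMonoid, MonoidHom.map_mclosure,
    MonoidHom.map_mclosure]
  simp [Set.image_insert_eq, arcQuotientEquiv_mk, arcPolyEquiv_X, arcVarEquiv, algebraMap_eq]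

theorem nonempty_localization_arcQuotientMonoid_ringEquiv :
    Nonempty (Localization (arcQuotientMonoid R) ≃+* Localization (arcMonoid R)) := by
  let L := Localization
    (Algebra.algebraMapSubmonoid (SolutionAlgebra (arcMatrix R) (arcRhs R)) (arcMonoid R))
  have : IsLocalization (arcMonoid R) L :=
    SolutionAlgebra.isLocalization (b := arcRhs R) (det_arcMatrix_mem_arcMonoid R) L
  let e : Localization (arcQuotientMonoid R) ≃+* L :=
    IsLocalization.ringEquivOfRingEquiv (M := arcQuotientMonoid R)
      (Localization (arcQuotientMonoid R)) L (arcQuotientEquiv R)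
      (map_arcQuotientEquiv_arcQuotientMonoid R)
  exact ⟨e.trans (IsLocalization.algEquiv (arcMonoid R) L (Localization (arcMonoid R))).toRingEquiv⟩

end ArcFiber

theorem arc_fiber_truncation_domain_dim_nine_general (R : Type*) [CommRing R] [IsDomain R]
    [IsNoetherianRing R] (J : Ideal (MvPolynomial (Fin 13) R))
    (hJ : J = Ideal.span
      {X 1 * X 5 - X 9 ^ 2,
       X 1 * X 6 + X 2 * X 5 - 2 * X 9 * X 10,
       X 1 * X 7 + X 2 * X 6 + X 3 * X 5 - 2 * X 9 * X 11 - X 10 ^ 2,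
       X 1 * X 8 + X 2 * X 7 + X 3 * X 6 + X 4 * X 5
         - 2 * X 9 * X 12 - 2 * X 10 * X 11 + X 0 ^ 5})
    (S : Submonoid (MvPolynomial (Fin 13) R ⧸ J))
    (hS : S = Submonoid.closure
      {Ideal.Quotient.mk J (X 0), Ideal.Quotient.mk J (X 2), Ideal.Quotient.mk J (X 1)}) :
    IsDomain (Localization S) ∧ ringKrullDim (Localization S) = ringKrullDim R + 9 := by
  subst hJ hS
  obtain ⟨e⟩ := nonempty_localization_arcQuotientMonoid_ringEquiv R
  have := IsLocalization.isDomain_localization (arcMonoid_le_nonZeroDivisors R)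
  refine ⟨e.toMulEquiv.isDomain _, (ringKrullDim_eq_of_ringEquiv e).trans ?_⟩
  simpa using ringKrullDim_localization_mvPolynomial fun _ ↦ isUnit_eval_one_of_mem_arcMonoid

/-- **Supporting computation for the arc fiber of `xy = z² − w⁵`.**  In the polynomial ring
`B = k[w₁, x₁, x₂, x₃, x₄, y₁, y₂, y₃, y₄, z₁, z₂, z₃, z₄]` (the `13` variables being,
in order, `X 0 = w₁`, `X 1,…,X 4 = x₁,…,x₄`, `X 5,…,X 8 = y₁,…,y₄`,
`X 9,…,X 12 = z₁,…,z₄`), consider the ideal `J` generated by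
`h₂ = x₁y₁ − z₁²`, `h₃ = x₁y₂ + x₂y₁ − 2z₁z₂`,
`h₄ = x₁y₃ + x₂y₂ + x₃y₁ − 2z₁z₃ − z₂²` and
`h₅ = x₁y₄ + x₂y₃ + x₃y₂ + x₄y₁ − 2z₁z₄ − 2z₂z₃ + w₁⁵`.
Then the localization of `B/J` at the multiplicative submonoid generated by the images of
`w₁`, `x₂` and `x₁` is an integral domain of Krull dimension `9`. -/
theorem arc_fiber_truncation_domain_dim_nine (k : Type*) [Field k] [CharZero k]
    (J : Ideal (MvPolynomial (Fin 13) k))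
    (hJ : J = Ideal.span
      {X 1 * X 5 - X 9 ^ 2,
       X 1 * X 6 + X 2 * X 5 - 2 * X 9 * X 10,
       X 1 * X 7 + X 2 * X 6 + X 3 * X 5 - 2 * X 9 * X 11 - X 10 ^ 2,
       X 1 * X 8 + X 2 * X 7 + X 3 * X 6 + X 4 * X 5
         - 2 * X 9 * X 12 - 2 * X 10 * X 11 + X 0 ^ 5})
    (S : Submonoid (MvPolynomial (Fin 13) k ⧸ J))
    (hS : S = Submonoid.closure
      {Ideal.Quotient.mk J (X 0), Ideal.Quotient.mk J (X 2), Ideal.Quotient.mk J (X 1)}) :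
    IsDomain (Localization S) ∧ ringKrullDim (Localization S) = 9 := by
  simpa using arc_fiber_truncation_domain_dim_nine_general k J hJ S hS
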